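/- Fix an integer n ≥ 2, and let s ∈ ℂ be transcendental over ℚ. Then the matrices a(s) and b(s) generate a free subgroup of rank 2 of GL(n,ℂ); that is, the group homomorphism from the free group on two generators to GL(n,ℂ) sending the first generator to a(s) and the second to b(s) is injective. -/

import Mathlib

/-!
The proof is a ping-pong argument on vectors of polynomials in `s`, where the size of a coordinate
is its degree in `s`; transcendence of `s` says that this degree is well defined. Let `D m` be the
set of vectors `v = (p₁(s), …, pₙ(s))` with `pᵢ ∈ ℚ[X]` whose `m`-th coordinate has degree strictly
larger than all the others.

For an integer `k ≠ 0` we have `a(s)^k = a(ks)` and `b(s)^k = b(ks)`. If `v ∈ D n` has last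
coordinate of degree `d`, then the `i`-th coordinate of `a(ks) v` has degree at most `d + n - i`,
and for `i = 1` the coefficient in degree `d + n - 1` comes from `vₙ` alone, so it is nonzero; hence
`a(ks)` maps `D n` into `D 1`. The matrix `b(ks)` only adds `k s v₁` to the last coordinate, so it
maps `D 1` into `D n`. As `D 1` and `D n` are disjoint and nonempty, the ping-pong lemma applies.
-/

open Matrix

/-- The `n × n` complex matrix `a(t) = exp(t x)` with `x = ∑_{i=1}^{n-1} E_{i,i+1}`:
its `(i,j)` entry is `t^{j-i}/(j-i)!` for `i ≤ j` and `0` otherwise. -/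
noncomputable def aMat (n : ℕ) (t : ℂ) : Matrix (Fin n) (Fin n) ℂ :=
  Matrix.of fun i j =>
    if (i : ℕ) ≤ (j : ℕ) then t ^ ((j : ℕ) - (i : ℕ)) / (((j : ℕ) - (i : ℕ)).factorial : ℂ)
    else 0

/-- The `n × n` complex matrix `b(s) = 1ₙ + s E_{n,1}` (in 0-based indexing the extra
entry `s` is in position `(n-1, 0)`). -/
def bMat (n : ℕ) (s : ℂ) : Matrix (Fin n) (Fin n) ℂ :=
  Matrix.of fun i j =>
    (if i = j then 1 else 0) + (if (i : ℕ) = n - 1 ∧ (j : ℕ) = 0 then s else 0)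

open Polynomial in
/-- Vectors of values at `s` of rational polynomials in which the `m`-th polynomial has strictly
the largest degree. -/
def dominantAt {n : ℕ} (s : ℂ) (m : Fin n) : Set (Fin n → ℂ) :=
  {v | ∃ p : Fin n → ℚ[X], (∀ i, v i = aeval s (p i)) ∧ ∀ i, i ≠ m → (p i).degree < (p m).degree}

theorem aMat_zero (n : ℕ) : aMat n 0 = 1 := by
  ext i j
  rw [aMat, Matrix.of_apply, Matrix.one_apply]
  rcases lt_trichotomy i j with h | h | h
  · have h' : (i : ℕ) < j := h
    rw [if_pos h'.le, if_neg h.ne, zero_pow (by omega), zero_div]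
  · subst h
    simp
  · have h' : (j : ℕ) < i := h
    rw [if_neg (by omega), if_neg h.ne']

/-- The binomial theorem in divided-power form. -/
theorem sum_antidiagonal_divPow (t u : ℂ) (m : ℕ) :
    ∑ x ∈ Finset.HasAntidiagonal.antidiagonal m, t ^ x.1 / (x.1.factorial : ℂ) * (u ^ x.2 / (x.2.factorial : ℂ)) =
      (t + u) ^ m / (m.factorial : ℂ) := by
  rw [(Commute.all t u).add_pow', Finset.sum_div]
  refine Finset.sum_congr rfl fun x hx => ?_
  have hx' := Finset.HasAntidiagonal.mem_antidiagonal.1 hx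
  have h := Nat.add_choose_mul_factorial_mul_factorial x.1 x.2
  rw [hx', ← Nat.choose_symm_of_eq_add hx'.symm] at h
  have h2 : ((m.choose x.1 : ℂ)) * x.1.factorial * x.2.factorial = m.factorial := by
    exact_mod_cast h
  have h3 : (x.1.factorial : ℂ) ≠ 0 := by exact_mod_cast x.1.factorial_ne_zero
  have h4 : (x.2.factorial : ℂ) ≠ 0 := by exact_mod_cast x.2.factorial_ne_zero
  have h5 : (m.factorial : ℂ) ≠ 0 := by exact_mod_cast m.factorial_ne_zero
  rw [nsmul_eq_mul]
  field_simp
  rw [← h2]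
  ring

theorem aMat_add (n : ℕ) (t u : ℂ) : aMat n (t + u) = aMat n t * aMat n u := by
  ext i j
  rw [Matrix.mul_apply]
  simp only [aMat, Matrix.of_apply]
  rw [Fin.sum_univ_eq_sum_range (fun k : ℕ =>
    (if (i : ℕ) ≤ k then t ^ (k - (i : ℕ)) / ((k - (i : ℕ)).factorial : ℂ) else 0) *
    (if k ≤ (j : ℕ) then u ^ ((j : ℕ) - k) / (((j : ℕ) - k).factorial : ℂ) else 0)) n]
  split_ifs with hij
  · rw [← sum_antidiagonal_divPow]
    refine Finset.sum_of_injOn (fun x => (i : ℕ) + x.1) ?_ ?_ ?_ ?_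
    · rintro ⟨a, b⟩ hx ⟨c, d⟩ hy h
      simp at hx hy h ⊢
      omega
    · rintro ⟨a, b⟩ hx
      have := j.2
      simp at hx ⊢
      omega
    · intro k hk hk'
      by_cases h1 : (i : ℕ) ≤ k
      · by_cases h2 : k ≤ (j : ℕ)
        · refine absurd ⟨(k - (i : ℕ), (j : ℕ) - k), ?_, ?_⟩ hk'
          · simp
            omega
          · simp
            omega
        · rw [if_neg h2, mul_zero]
      · rw [if_neg h1, zero_mul]
    · rintro ⟨a, b⟩ hx
      simp only [Finset.HasAntidiagonal.mem_antidiagonal] at hx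
      have e1 : (i : ℕ) + a - i = a := by omega
      have e2 : (j : ℕ) - (i + a) = b := by omega
      simp only [e1, e2]
      rw [if_pos (by omega), if_pos (by omega)]
  · symm
    refine Finset.sum_eq_zero fun k _ => ?_
    by_cases h1 : (i : ℕ) ≤ k
    · rw [if_neg (show ¬ k ≤ (j : ℕ) by omega), mul_zero]
    · rw [if_neg h1, zero_mul]

theorem bMat_eq (m : ℕ) (t : ℂ) :
    bMat (m + 2) t = 1 + Matrix.single (Fin.last (m + 1)) 0 t := by
  ext i j
  simp only [bMat, Matrix.of_apply, Matrix.add_apply, Matrix.one_apply, Matrix.single_apply,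
    Fin.ext_iff, Fin.val_last, Fin.val_zero]
  congr 2
  simp only [eq_comm, eq_iff_iff]
  rfl

theorem bMat_zero (m : ℕ) : bMat (m + 2) 0 = 1 := by
  rw [bMat_eq, Matrix.single_zero, add_zero]

theorem bMat_add (m : ℕ) (t u : ℂ) :
    bMat (m + 2) (t + u) = bMat (m + 2) t * bMat (m + 2) u := by
  have hl : (0 : Fin (m + 2)) ≠ Fin.last (m + 1) := Fin.last_pos.ne
  have hz : Matrix.single (Fin.last (m + 1)) (0 : Fin (m + 2)) t *
      Matrix.single (Fin.last (m + 1)) (0 : Fin (m + 2)) u = 0 := by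
    simp [hl]
  rw [bMat_eq, bMat_eq, bMat_eq, add_mul, mul_add, mul_add, one_mul, one_mul, mul_one,
    hz, Matrix.single_add, add_zero]
  abel

/-- A one-parameter family of matrices with `M 0 = 1` and `M (t + u) = M t * M u`, as a
homomorphism to `GL`. -/
def oneParam {n : ℕ} (M : ℂ → Matrix (Fin n) (Fin n) ℂ) (h0 : M 0 = 1)
    (hM : ∀ t u, M (t + u) = M t * M u) : Multiplicative ℂ →* GL (Fin n) ℂ :=
  MonoidHom.toHomUnits
    { toFun := fun t => M t.toAdd
      map_one' := h0
      map_mul' := fun t u => hM t.toAdd u.toAdd }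

theorem oneParam_zpow {n : ℕ} (M : ℂ → Matrix (Fin n) (Fin n) ℂ) (h0 : M 0 = 1)
    (hM : ∀ t u, M (t + u) = M t * M u) (s : ℂ) (k : ℤ) :
    ((oneParam M h0 hM (Multiplicative.ofAdd s) ^ k : GL (Fin n) ℂ) : Matrix _ _ ℂ) =
      M (k * s) := by
  rw [← map_zpow, ← ofAdd_zsmul, zsmul_eq_mul]
  rfl

open scoped Pointwise Function in
/-- Ping-pong for infinite cyclic groups: one set per generator, into which every nontrivial power
of that generator sends the sets of the other generators. -/
theorem injective_lift_of_zpow_ping_pong {ι : Type} [Nontrivial ι] {G : Type} [Group G]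
    (a : ι → G) {α : Type} [MulAction G α] (X : ι → Set α) (hne : ∀ i, (X i).Nonempty)
    (hdisj : Pairwise (Disjoint on X))
    (hpp : ∀ i j, i ≠ j → ∀ k : ℤ, k ≠ 0 → ∀ x ∈ X j, a i ^ k • x ∈ X i) :
    Function.Injective (FreeGroup.lift a) := by
  have : FreeGroup.lift a =
      (Monoid.CoprodI.lift fun i => FreeGroup.lift fun _ => a i).comp
        (@freeGroupEquivCoprodI ι).toMonoidHom := by
    ext i
    simp
  rw [this, MonoidHom.coe_comp]
  refine Function.Injective.comp ?_ (MulEquiv.injective freeGroupEquivCoprodI)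
  refine Monoid.CoprodI.lift_injective_of_ping_pong
    (H := fun _ : ι => FreeGroup Unit) (fun i => FreeGroup.lift fun _ => a i) ?_ X hne hdisj ?_
  · inhabit ι
    refine Or.inr ⟨default, ?_⟩
    rw [FreeGroup.freeGroupUnitEquivInt.cardinal_eq, Cardinal.mk_denumerable]
    exact Cardinal.natCast_le_aleph0
  · intro i j hij
    refine FreeGroup.freeGroupUnitEquivInt.forall_congr_left.mpr ?_
    intro k hk
    change FreeGroup.lift (fun _ => a i) (FreeGroup.of () ^ k) • X j ⊆ X i
    have hk0 : k ≠ 0 := by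
      rintro rfl
      apply hk
      simp [FreeGroup.freeGroupUnitEquivInt]
    simp only [map_zpow, FreeGroup.lift_apply_of]
    rintro _ ⟨x, hx, rfl⟩
    exact hpp i j hij k hk0 x hx

theorem dominantAt_nonempty {n : ℕ} (s : ℂ) (m : Fin n) : (dominantAt s m).Nonempty := by
  refine ⟨Pi.single m 1, Pi.single m 1, fun i => ?_, fun i hi => ?_⟩
  · by_cases h : i = m
    · subst h
      simp
    · simp [h]
  · simp [hi]

theorem dominantAt_disjoint {n : ℕ} {s : ℂ} (hs : Transcendental ℚ s) {m m' : Fin n}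
    (h : m ≠ m') : Disjoint (dominantAt s m) (dominantAt s m') := by
  rw [Set.disjoint_left]
  rintro v ⟨p, hp, hpd⟩ ⟨q, hq, hqd⟩
  have hpq : p = q := by
    funext i
    exact transcendental_iff_injective.1 hs ((hp i).symm.trans (hq i))
  subst hpq
  exact lt_asymm (hpd _ h.symm) (hqd _ h)

open Polynomial in
/-- `a(ks)` sends `D n` into `D 1`: the last coordinate enters the `i`-th one multiplied by a
nonzero rational times `s ^ (n - i)`, the highest power occurring in row `i`. -/
theorem aMat_mulVec_mem {m : ℕ} {s : ℂ} {k : ℤ} (hk : k ≠ 0) {v : Fin (m + 2) → ℂ}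
    (hv : v ∈ dominantAt s (Fin.last (m + 1))) :
    aMat (m + 2) (k * s) *ᵥ v ∈ dominantAt s (0 : Fin (m + 2)) := by
  obtain ⟨p, hp, hpd⟩ := hv
  set l : Fin (m + 2) := Fin.last (m + 1) with hl
  have hl0 : (0 : Fin (m + 2)) ≠ l := Fin.last_pos.ne
  have hpl : p l ≠ 0 := by
    intro h
    have := hpd 0 hl0
    rw [h, degree_zero] at this
    exact not_lt_bot this
  set d := (p l).natDegree with hd
  have hdeg : ∀ j, (p j).natDegree ≤ d := fun j => by
    by_cases h : j = l
    · rw [h]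
    · exact natDegree_le_natDegree (hpd j h).le
  let c : ℕ → ℚ := fun e => (k : ℚ) ^ e / (e.factorial : ℚ)
  let q : Fin (m + 2) → ℚ[X] := fun i =>
    ∑ j : Fin (m + 2), if (i : ℕ) ≤ j then C (c (j - i)) * (X ^ ((j : ℕ) - i) * p j) else 0
  have hup : ∀ i, (q i).natDegree ≤ d + (m + 1 - i) := by
    intro i
    refine natDegree_sum_le_of_forall_le _ _ fun j _ => ?_
    split_ifs with hij
    · refine (natDegree_C_mul_le _ _).trans ?_
      refine natDegree_mul_le.trans ?_
      rw [natDegree_X_pow]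
      have := hdeg j
      have := j.2
      omega
    · simp
  -- Only the last summand reaches this degree, since the other `p j` have degree below `d`.
  have hcoeff : (q 0).coeff (d + (m + 1)) = c (m + 1) * (p l).leadingCoeff := by
    simp only [q, finsetSum_coeff]
    rw [Finset.sum_eq_single l]
    · simp only [Fin.val_zero, Nat.zero_le, if_true, Nat.sub_zero, coeff_C_mul, hl, Fin.val_last,
        coeff_X_pow_mul]
      rfl
    · intro j _ hj
      have hjl : (j : ℕ) ≤ m + 1 := by have := j.2; omega
      have e : d + (m + 1) = d + (m + 1 - j) + j := by omega
      simp only [Fin.val_zero, Nat.zero_le, if_true, Nat.sub_zero, coeff_C_mul]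
      rw [e, coeff_X_pow_mul, coeff_eq_zero_of_degree_lt, mul_zero]
      refine (hpd j hj).trans_le ?_
      rw [degree_eq_natDegree hpl]
      exact_mod_cast Nat.le_add_right _ _
    · simp
  have hc : c (m + 1) ≠ 0 :=
    div_ne_zero (pow_ne_zero _ (by exact_mod_cast hk)) (by exact_mod_cast Nat.factorial_ne_zero _)
  refine ⟨q, fun i => ?_, fun i hi => ?_⟩
  · simp only [Matrix.mulVec, dotProduct, q, map_sum, aMat, Matrix.of_apply]
    refine Finset.sum_congr rfl fun j _ => ?_
    split_ifs with hij
    · simp only [map_mul, map_pow, aeval_X, aeval_C, c, hp]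
      rw [map_div₀, map_pow, map_intCast, map_natCast, mul_pow]
      ring
    · simp
  · have h1 : ((d + (m + 1) : ℕ) : WithBot ℕ) ≤ (q 0).degree := by
      refine le_degree_of_ne_zero ?_
      rw [hcoeff]
      exact mul_ne_zero hc (leadingCoeff_ne_zero.2 hpl)
    refine lt_of_le_of_lt (degree_le_of_natDegree_le (hup i)) (lt_of_lt_of_le ?_ h1)
    have : (i : ℕ) ≠ 0 := fun h => hi (Fin.ext h)
    exact_mod_cast (show d + (m + 1 - i) < d + (m + 1) by omega)

open Polynomial in
/-- `b(ks)` sends `D 1` into `D n`: `k s` times the dominant coordinate is added to the last one. -/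
theorem bMat_mulVec_mem {m : ℕ} {s : ℂ} {k : ℤ} (hk : k ≠ 0) {v : Fin (m + 2) → ℂ}
    (hv : v ∈ dominantAt s (0 : Fin (m + 2))) :
    bMat (m + 2) (k * s) *ᵥ v ∈ dominantAt s (Fin.last (m + 1)) := by
  obtain ⟨p, hp, hpd⟩ := hv
  set l : Fin (m + 2) := Fin.last (m + 1) with hl
  have hl0 : l ≠ 0 := Fin.last_pos.ne'
  have hp0 : p 0 ≠ 0 := by
    intro h
    have := hpd l hl0
    rw [h, degree_zero] at this
    exact not_lt_bot this
  have hk' : (k : ℚ) ≠ 0 := by exact_mod_cast hk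
  have hdeg : (C (k : ℚ) * (X * p 0)).degree = (p 0).degree + 1 := by
    rw [degree_C_mul hk', degree_mul, degree_X, add_comm]
  have hlt : (p 0).degree < (p 0).degree + 1 := by
    rw [degree_eq_natDegree hp0]
    exact_mod_cast Nat.lt_succ_self _
  have hnew : (p l + C (k : ℚ) * (X * p 0)).degree = (p 0).degree + 1 := by
    rw [degree_add_eq_right_of_degree_lt, hdeg]
    rw [hdeg]
    exact (hpd l hl0).trans hlt
  refine ⟨Function.update p l (p l + C (k : ℚ) * (X * p 0)), fun i => ?_, fun i hi => ?_⟩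
  · rw [bMat_eq, Matrix.add_mulVec, Matrix.one_mulVec, Pi.add_apply, Matrix.single_mulVec,
      ← hl]
    by_cases h : i = l
    · rw [h, Function.update_self, Function.update_self]
      simp [hp, mul_assoc]
    · rw [Function.update_of_ne h, Function.update_of_ne h]
      simp [hp]
  · rw [Function.update_self, Function.update_of_ne hi, hnew]
    refine lt_of_le_of_lt ?_ hlt
    by_cases h : i = 0
    · rw [h]
    · exact (hpd i h).le

/-- for `n ≥ 2` and `s ∈ ℂ` transcendental over `ℚ`, the
matrices `a(s)` and `b(s)` are invertible and generate a free subgroup of rank 2 of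
`GL(n, ℂ)`: the homomorphism from the free group on two generators sending one generator
to `a(s)` and the other to `b(s)` is injective. -/
theorem stmt19 (n : ℕ) (hn : 2 ≤ n) (s : ℂ)
    (hs : Transcendental ℚ s) :
    ∃ A B : GL (Fin n) ℂ, (A : Matrix (Fin n) (Fin n) ℂ) = aMat n s ∧
      (B : Matrix (Fin n) (Fin n) ℂ) = bMat n s ∧
      Function.Injective
        ⇑(FreeGroup.lift (fun g : Bool => if g then A else B) :
          FreeGroup Bool →* GL (Fin n) ℂ) := by
  obtain ⟨m, rfl⟩ : ∃ m, n = m + 2 := ⟨n - 2, by omega⟩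
  let A := oneParam (aMat (m + 2)) (aMat_zero _) (aMat_add _) (Multiplicative.ofAdd s)
  let B := oneParam (bMat (m + 2)) (bMat_zero _) (bMat_add _) (Multiplicative.ofAdd s)
  have hl : (0 : Fin (m + 2)) ≠ Fin.last (m + 1) := Fin.last_pos.ne
  refine ⟨A, B, rfl, rfl, ?_⟩
  refine injective_lift_of_zpow_ping_pong (α := Fin (m + 2) → ℂ) _
    (fun g : Bool => dominantAt s (if g then (0 : Fin (m + 2)) else Fin.last (m + 1)))
    (fun g => dominantAt_nonempty s _) ?_ ?_
  · rintro (_ | _) (_ | _) h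
    · exact absurd rfl h
    · exact dominantAt_disjoint hs hl.symm
    · exact dominantAt_disjoint hs hl
    · exact absurd rfl h
  · rintro (_ | _) (_ | _) h k hk x hx
    · exact absurd rfl h
    · change ((B ^ k : GL (Fin (m + 2)) ℂ) : Matrix (Fin (m + 2)) (Fin (m + 2)) ℂ) *ᵥ x ∈ _
      rw [oneParam_zpow]
      exact bMat_mulVec_mem hk hx
    · change ((A ^ k : GL (Fin (m + 2)) ℂ) : Matrix (Fin (m + 2)) (Fin (m + 2)) ℂ) *ᵥ x ∈ _
      rw [oneParam_zpow]
      exact aMat_mulVec_mem hk hx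
    · exact absurd rfl h
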